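/- Let f : X → (-∞,+∞] be a c-antiderivative of a multivalued mapping M : X ⇉ Y, and let S be a nonempty subset of dom(M). If h : X → (-∞,+∞] is any function (not necessarily c-convex) such that G(M) ⊆ G(∂_c h) and h|_S = f|_S, then α_{[c,f|_S,M]} ≤ h pointwise on X and h^c ∈ 𝒜_{[c,f^c|_{M(S)},M⁻¹]}, i.e., h^c is a c-convex c-antiderivative of M⁻¹ which coincides with f^c on M(S). -/

import Mathlib

noncomputable section

open scoped Classical

variable {X Y : Type*}

/-- The `c`-transform of `f : X → EReal`, a function on `Y`:
`f^c(y) = sup_{x ∈ X} (c(x,y) - f(x))`. The `c`-transform of a function on `Y` is obtained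
by applying this to the swapped coupling `fun y x => c x y`. -/
def cTransform (c : X → Y → ℝ) (f : X → EReal) : Y → EReal :=
  fun y => ⨆ x, ((c x y : EReal) - f x)

/-- `f` is proper: it takes no value `-∞` (i.e. maps into `(-∞, +∞]`) and is finite somewhere. -/
def ProperFn (f : X → EReal) : Prop :=
  (∀ x, f x ≠ ⊥) ∧ ∃ x, f x ≠ ⊤

/-- `f` is `c`-convex: it is proper and is the `c`-transform of some proper
`g : Y → (-∞, +∞]`. -/
def IsCConvex (c : X → Y → ℝ) (f : X → EReal) : Prop :=
  ProperFn f ∧ ∃ g : Y → EReal, ProperFn g ∧ f = cTransform (fun y x => c x y) g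

/-- The `c`-subdifferential of `f`:
`∂_c f(x) = { y | ∀ x', f(x) + c(x',y) ≤ f(x') + c(x,y) }`. -/
def cSubdiff (c : X → Y → ℝ) (f : X → EReal) (x : X) : Set Y :=
  { y | ∀ x', f x + (c x' y : EReal) ≤ f x' + (c x y : EReal) }

/-- The domain of a multivalued mapping `M : X ⇉ Y`. -/
def mapDom (M : X → Set Y) : Set X := { x | (M x).Nonempty }

/-- The inverse multivalued mapping `M⁻¹ : Y ⇉ X`. -/
def mapInv (M : X → Set Y) : Y → Set X := fun y => { x | y ∈ M x }

/-- The image `M(S) = ⋃_{s ∈ S} M(s)` of a set `S` under a multivalued mapping. -/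
def mapImageOn (M : X → Set Y) (S : Set X) : Set Y := { y | ∃ s ∈ S, y ∈ M s }

/-- The image `Im(M) = ⋃_{x ∈ X} M(x)` of a multivalued mapping. -/
def mapIm (M : X → Set Y) : Set Y := { y | ∃ x, y ∈ M x }

/-- `f` is a `c`-antiderivative of `M`: `f` is proper and `G(M) ⊆ G(∂_c f)`. -/
def IsCAntiderivative (c : X → Y → ℝ) (f : X → EReal) (M : X → Set Y) : Prop :=
  ProperFn f ∧ ∀ x y, y ∈ M x → y ∈ cSubdiff c f x

/-- The family `𝒜_{[c, f|_S, M]}` of all `c`-convex `c`-antiderivatives of `M`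
which coincide with `f` on `S`. -/
def cFamily (c : X → Y → ℝ) (f : X → EReal) (S : Set X) (M : X → Set Y) :
    Set (X → EReal) :=
  { h | IsCConvex c h ∧ (∀ x y, y ∈ M x → y ∈ cSubdiff c h x) ∧ ∀ s ∈ S, h s = f s }

/-- The upper envelope `γ_{[c, f|_S, M]}`. -/
def upperEnv (c : X → Y → ℝ) (f : X → EReal) (S : Set X) (M : X → Set Y) : X → EReal :=
  fun x => ⨆ h ∈ cFamily c f S M, h x

/-- The lower envelope `α_{[c, f|_S, M]}`. -/
def lowerEnv (c : X → Y → ℝ) (f : X → EReal) (S : Set X) (M : X → Set Y) : X → EReal :=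
  fun x => ⨅ h ∈ cFamily c f S M, h x

/-- The indicator function `ι_A` (0 on `A`, `+∞` off `A`). -/
def indicatorE (A : Set X) : X → EReal := fun x => if x ∈ A then 0 else ⊤

/-- Rockafellar's function `R_{[c,M,s]}`: the supremum over `n ≥ 1` and chains
`x_1 = s`, `x_{n+1} = x`, `{(x_i, y_i)}_{i=1}^n ⊆ G(M)` of
`Σ_{i=1}^n [c(x_{i+1}, y_i) - c(x_i, y_i)]` (0-indexed below). -/
def rockafellar (c : X → Y → ℝ) (M : X → Set Y) (s : X) : X → EReal := fun x =>
  ⨆ (n : ℕ) (_ : 0 < n) (xs : ℕ → X) (ys : ℕ → Y)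
      (_ : xs 0 = s ∧ ∀ i < n, ys i ∈ M (xs i)),
    (((∑ i ∈ Finset.range n,
        (c (if i + 1 < n then xs (i + 1) else x) (ys i) - c (xs i) (ys i))) : ℝ) : EReal)

/-- `M` is cyclically monotone of order `n` with respect to `c`: for any `n` pairs
`{(x_i, y_i)}_{i=1}^n ⊆ G(M)`, setting `x_{n+1} = x_1`,
`0 ≤ Σ_{i=1}^n [c(x_i,y_i) - c(x_{i+1},y_i)]` (0-indexed below, cyclically). -/
def IsNCMonotone (c : X → Y → ℝ) (M : X → Set Y) (n : ℕ) : Prop :=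
  ∀ (xs : ℕ → X) (ys : ℕ → Y), (∀ i < n, ys i ∈ M (xs i)) →
    0 ≤ ∑ i ∈ Finset.range n, (c (xs i) (ys i) - c (xs ((i + 1) % n)) (ys i))

/-- `M` is `c`-cyclically monotone: `n`-`c`-monotone for all `n`. -/
def IsCCyclicallyMonotone (c : X → Y → ℝ) (M : X → Set Y) : Prop :=
  ∀ n : ℕ, IsNCMonotone c M n

/-!
The inequality defining `y ∈ ∂_c h(x)` says exactly that `x` attains the supremum in `h^c(y)`, that
is, `h^c(y) = c(x,y) - h(x)`. Together with `h^{cc} ≤ h` this gives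
`h^{cc}(x) ≤ h(x) = c(x,y) - h^c(y)`, so `y` attains the supremum in `h^{cc}(x)`. Hence passing from
`h` to `h^c` inverts the pairs of the subdifferential, and `h^{cc} = h` at such points `x`.
Consequently `h^{cc}` competes in the infimum defining `α_{[c,f|_S,M]}`, while on `M(S)` both `h^c`
and `f^c` are given by `c(s,y) - f(s)`.
-/

section ERealArithmetic

variable {r s : ℝ} {a b : EReal}

theorem coe_sub_le_comm : (r : EReal) - a ≤ b ↔ (r : EReal) - b ≤ a := by
  induction a <;> induction b
  case coe.coe a b => exact_mod_cast sub_le_comm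
  all_goals simp [← EReal.coe_sub]

theorem coe_sub_coe_sub : (r : EReal) - (r - a) = a := by
  induction a <;> simp [← EReal.coe_sub]

theorem coe_sub_eq_bot_iff : (r : EReal) - a = ⊥ ↔ a = ⊤ := by
  induction a <;> simp [← EReal.coe_sub]

theorem coe_sub_eq_top_iff : (r : EReal) - a = ⊤ ↔ a = ⊥ := by
  induction a <;> simp [← EReal.coe_sub]

theorem add_coe_le_add_coe_iff_coe_sub_le_coe_sub :
    a + r ≤ b + s ↔ (r : EReal) - b ≤ s - a := by
  induction a <;> induction b
  case coe.coe a b =>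
    norm_cast
    rw [sub_le_sub_iff, add_comm r, add_comm s]
  all_goals simp [← EReal.coe_sub, ← EReal.coe_add]

end ERealArithmetic

section CTransform

variable {c : X → Y → ℝ} {f g : X → EReal} {x : X} {y : Y}

theorem coe_sub_le_cTransform (c : X → Y → ℝ) (f : X → EReal) (x : X) (y : Y) :
    (c x y : EReal) - f x ≤ cTransform c f y :=
  le_iSup (fun x => (c x y : EReal) - f x) x

theorem cTransform_eq_bot_iff : cTransform c f y = ⊥ ↔ ∀ x, f x = ⊤ := by
  simp only [cTransform, iSup_eq_bot, coe_sub_eq_bot_iff]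

theorem cTransform_cTransform_le (c : X → Y → ℝ) (f : X → EReal) (x : X) :
    cTransform (fun y x => c x y) (cTransform c f) x ≤ f x :=
  iSup_le fun y => coe_sub_le_comm.1 (coe_sub_le_cTransform c f x y)

theorem mem_cSubdiff_iff_cTransform_le :
    y ∈ cSubdiff c f x ↔ cTransform c f y ≤ (c x y : EReal) - f x := by
  simp only [cSubdiff, Set.mem_ofPred_eq, cTransform, iSup_le_iff,
    add_coe_le_add_coe_iff_coe_sub_le_coe_sub]

theorem cTransform_eq_of_mem_cSubdiff (hy : y ∈ cSubdiff c f x) :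
    cTransform c f y = (c x y : EReal) - f x :=
  (mem_cSubdiff_iff_cTransform_le.1 hy).antisymm (coe_sub_le_cTransform c f x y)

theorem mem_cSubdiff_cTransform (hy : y ∈ cSubdiff c f x) :
    x ∈ cSubdiff (fun y x => c x y) (cTransform c f) y := by
  rw [mem_cSubdiff_iff_cTransform_le, cTransform_eq_of_mem_cSubdiff hy, coe_sub_coe_sub]
  exact cTransform_cTransform_le c f x

theorem cTransform_cTransform_eq_of_mem_cSubdiff (hy : y ∈ cSubdiff c f x) :
    cTransform (fun y x => c x y) (cTransform c f) x = f x := by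
  rw [cTransform_eq_of_mem_cSubdiff (mem_cSubdiff_cTransform hy),
    cTransform_eq_of_mem_cSubdiff hy, coe_sub_coe_sub]

theorem cTransform_eq_cTransform_of_mem_cSubdiff (hf : y ∈ cSubdiff c f x)
    (hg : y ∈ cSubdiff c g x) (hfg : f x = g x) : cTransform c f y = cTransform c g y := by
  rw [cTransform_eq_of_mem_cSubdiff hf, cTransform_eq_of_mem_cSubdiff hg, hfg]

theorem ne_top_of_mem_cSubdiff (hf : ∃ x₀, f x₀ ≠ ⊤) (hy : y ∈ cSubdiff c f x) :
    f x ≠ ⊤ := by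
  obtain ⟨x₀, hx₀⟩ := hf
  intro hx
  have transform_eq_bot : cTransform c f y = ⊥ := by
    rw [cTransform_eq_of_mem_cSubdiff hy, hx, EReal.sub_top]
  exact hx₀ (cTransform_eq_bot_iff.1 transform_eq_bot x₀)

theorem ProperFn.cTransform_of_mem_cSubdiff (hf : ProperFn f) (hy : y ∈ cSubdiff c f x) :
    ProperFn (cTransform c f) := by
  refine ⟨fun _ hbot => ne_top_of_mem_cSubdiff hf.2 hy (cTransform_eq_bot_iff.1 hbot x), y, ?_⟩
  rw [cTransform_eq_of_mem_cSubdiff hy, Ne, coe_sub_eq_top_iff]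
  exact hf.1 x

end CTransform

namespace IsCAntiderivative

variable {c : X → Y → ℝ} {f h : X → EReal} {M : X → Set Y} {S : Set X}

theorem cTransform_mapInv (hh : IsCAntiderivative c h M) (hM : (mapDom M).Nonempty) :
    IsCAntiderivative (fun y x => c x y) (cTransform c h) (mapInv M) := by
  obtain ⟨x, y, hxy⟩ := hM
  exact ⟨hh.1.cTransform_of_mem_cSubdiff (hh.2 x y hxy),
    fun y x hxy => mem_cSubdiff_cTransform (hh.2 x y hxy)⟩

theorem isCConvex_cTransform (hh : IsCAntiderivative c h M) (hM : (mapDom M).Nonempty) :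
    IsCConvex (fun y x => c x y) (cTransform c h) :=
  ⟨(hh.cTransform_mapInv hM).1, h, hh.1, rfl⟩

theorem cTransform_cTransform_mem_cFamily (hh : IsCAntiderivative c h M)
    (hM : (mapDom M).Nonempty) (hS : S ⊆ mapDom M) (hhS : ∀ s ∈ S, h s = f s) :
    cTransform (fun y x => c x y) (cTransform c h) ∈ cFamily c f S M := by
  have inv_dom_nonempty : (mapDom (mapInv M)).Nonempty := by
    obtain ⟨x, y, hxy⟩ := hM
    exact ⟨y, x, hxy⟩
  have hinv := hh.cTransform_mapInv hM
  refine ⟨hinv.isCConvex_cTransform inv_dom_nonempty, (hinv.cTransform_mapInv inv_dom_nonempty).2,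
    fun s hs => ?_⟩
  obtain ⟨y, hy⟩ := hS hs
  rw [cTransform_cTransform_eq_of_mem_cSubdiff (hh.2 s y hy), hhS s hs]

theorem lowerEnv_le (hh : IsCAntiderivative c h M) (hM : (mapDom M).Nonempty)
    (hS : S ⊆ mapDom M) (hhS : ∀ s ∈ S, h s = f s) (x : X) : lowerEnv c f S M x ≤ h x :=
  (iInf₂_le _ (hh.cTransform_cTransform_mem_cFamily hM hS hhS)).trans
    (cTransform_cTransform_le c h x)

end IsCAntiderivative

/-- If `h : X → (-∞,+∞]` is any function with `G(M) ⊆ G(∂_c h)` and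
`h|_S = f|_S`, then `α_{[c,f|_S,M]} ≤ h` and `h^c ∈ 𝒜_{[c, f^c|_{M(S)}, M⁻¹]}`. -/
theorem statement3 [Nonempty X] [Nonempty Y] (c : X → Y → ℝ) (f : X → EReal)
    (M : X → Set Y) (hf : IsCAntiderivative c f M)
    (S : Set X) (hS : S.Nonempty) (hSdom : S ⊆ mapDom M)
    (h : X → EReal) (hbot : ∀ x, h x ≠ ⊥)
    (hanti : ∀ x y, y ∈ M x → y ∈ cSubdiff c h x)
    (hhS : ∀ s ∈ S, h s = f s) :
    (∀ x, lowerEnv c f S M x ≤ h x) ∧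
      cTransform c h ∈
        cFamily (fun y x => c x y) (cTransform c f) (mapImageOn M S) (mapInv M) := by
  have hM : (mapDom M).Nonempty := hS.mono hSdom
  have hproper : ProperFn h := by
    obtain ⟨s, hs⟩ := hS
    obtain ⟨y, hy⟩ := hSdom hs
    exact ⟨hbot, s, hhS s hs ▸ ne_top_of_mem_cSubdiff hf.1.2 (hf.2 s y hy)⟩
  have hh : IsCAntiderivative c h M := ⟨hproper, hanti⟩
  refine ⟨hh.lowerEnv_le hM hSdom hhS, hh.isCConvex_cTransform hM, (hh.cTransform_mapInv hM).2, ?_⟩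
  rintro y ⟨s, hs, hy⟩
  exact cTransform_eq_cTransform_of_mem_cSubdiff (hanti s y hy) (hf.2 s y hy) (hhS s hs)
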